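/- Let F denote the Gauss hypergeometric function, defined on Ω = { (x, α, β, γ) ∈ ℂ⁴ : |x| < 1 and γ ≠ -n for all natural numbers n } by the convergent series F(x,α,β,γ) = ∑_{n=0}^∞ ((α)_n (β)_n / (γ)_n) · xⁿ/n!. Then F satisfies no nonzero algebraic partial differential equation with respect to the parameters α, β, γ: for every nonzero polynomial P with complex coefficients in the variables X, A, B, C and finitely many of the variables Y_{ijk} indexed by (i,j,k) ∈ ℕ³, there exists a point (x, α, β, γ) ∈ Ω at which substituting X = x, A = α, B = β, C = γ and Y_{ijk} = ∂^{i+j+k}F/∂α^i ∂β^j ∂γ^k evaluated at (x, α, β, γ) gives a nonzero value. Equivalently, the family of all partial derivatives of F with respect to the parameters α, β, γ is algebraically independent over the field of rational functions ℂ(x, α, β, γ). -/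

import Mathlib

/-- Partial derivative operator in the `i`-th coordinate direction on `ℂ⁴`, whose
coordinates `(x, α, β, γ)` are indexed by `0, 1, 2, 3 : Fin 4`. -/
noncomputable def pd15 (i : Fin 4) (f : (Fin 4 → ℂ) → ℂ) : (Fin 4 → ℂ) → ℂ :=
  fun p => fderiv ℂ f p (Pi.single i 1)

/-- The Gauss hypergeometric function `F(x,α,β,γ) = ∑ₙ ((α)ₙ(β)ₙ/(γ)ₙ)·xⁿ/n!` as a function
of `(x,α,β,γ) : Fin 4 → ℂ`. -/
noncomputable def hgF15 : (Fin 4 → ℂ) → ℂ := fun p =>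
  ∑' n : ℕ, ((ascPochhammer ℂ n).eval (p 1) * (ascPochhammer ℂ n).eval (p 2) /
    (ascPochhammer ℂ n).eval (p 3)) * p 0 ^ n / n.factorial

/-- The iterated parameter derivative `∂^{i+j+k}F/∂α^i ∂β^j ∂γ^k` of the hypergeometric
function. -/
noncomputable def hgDeriv15 (i j k : ℕ) : (Fin 4 → ℂ) → ℂ :=
  (pd15 1)^[i] ((pd15 2)^[j] ((pd15 3)^[k] hgF15))

/-!
Write `uₙ` for the polynomial `(·)ₙ`. The coefficient of `xⁿ` in `∂^{i+j+k}F/∂α^i∂β^j∂γ^k` is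
`uₙ⁽ⁱ⁾(α) uₙ⁽ʲ⁾(β) (1/uₙ)⁽ᵏ⁾(γ) / n!`. At `γ = -m` it is regular for `n ≤ m` and has a pole of exact
order `k + 1` for `n > m`.

Suppose `P` vanishes identically at `F`, and let `xᵛ` be the lowest power of `x` occurring in the
partial derivatives `∂P/∂Y_{ijk}` evaluated at `F`, with coefficients `g_{ijk}(α, β, γ)`. Expand `P`
around the series truncated after `xᵐ`, with `m ≥ v`: in the coefficient of `x^{m+1+v}` only the
products of `g_{ijk}` with the coefficients of `x^{m+1}` can have a pole at `γ = -m`. For the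
largest `k` with `g_{ijk} ≠ 0` for some `i, j`, the polar part of order `k + 1` gives
`∑ g_{ijk}(α, β, -m) u_{m+1}⁽ⁱ⁾(α) u_{m+1}⁽ʲ⁾(β) = 0` for every large `m`.

The derivatives of `uₙ` are linearly independent over the polynomials of degree at most `D` once `n`
is large: the equation `X uₙ(X + 1) = (X + n) uₙ` turns a relation of minimal order into a first
order difference equation with no rational solution. Hence `g_{ijk}` vanishes at `γ = -m` for all
large `m`, so it is zero, and every `∂P/∂Y_{ijk}` vanishes at `F` too. By induction on the degree
`P` involves only `x, α, β, γ`, which are independent.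
-/

namespace Hypergeometric

section Pochhammer

open Polynomial Filter

variable {R : Type*} [CommRing R]

variable (R) in
lemma ascPochhammer_eq_prod (n : ℕ) :
    ascPochhammer R n = ∏ l ∈ Finset.range n, (X - C (-(l : R))) := by
  induction n with
  | zero => simp
  | succ n ih => simp [ascPochhammer_succ_right, Finset.prod_range_succ, ih]

variable (R) in
lemma X_mul_ascPochhammer_comp_X_add_one (n : ℕ) :
    X * (ascPochhammer R n).comp (X + 1) = (X + (n : R[X])) * ascPochhammer R n := by
  rw [← ascPochhammer_succ_left, ascPochhammer_succ_right, mul_comm]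

lemma iterate_derivative_comp_X_add_one (p : R[X]) (i : ℕ) :
    derivative^[i] (p.comp (X + 1)) = (derivative^[i] p).comp (X + 1) := by
  induction i with
  | zero => rfl
  | succ i ih => simp [Function.iterate_succ_apply', ih, derivative_comp]

lemma natDegree_comp_X_add_one_le (p : R[X]) : (p.comp (X + 1)).natDegree ≤ p.natDegree := by
  have hX : (X + 1 : R[X]).natDegree ≤ 1 := by compute_degree
  simpa using natDegree_comp_le.trans (Nat.mul_le_mul_left p.natDegree hX)

/- Leibniz' rule for `u(X + 1) = (1 + n / X) u`, with denominators cleared. -/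
variable (R) in
lemma X_pow_mul_iterate_derivative_ascPochhammer_comp (n i : ℕ) :
    X ^ (i + 1) * (derivative^[i] (ascPochhammer R n)).comp (X + 1) =
      X ^ (i + 1) * derivative^[i] (ascPochhammer R n) +
        (n : R[X]) * ∑ j ∈ Finset.range (i + 1), (-1) ^ (i - j) * (i.descFactorial (i - j) : R[X]) *
          X ^ j * derivative^[j] (ascPochhammer R n) := by
  simp only [← iterate_derivative_comp_X_add_one]
  have hshift := X_mul_ascPochhammer_comp_X_add_one R n
  induction i with
  | zero => simp; linear_combination hshift
  | succ i ih =>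
    have hleibniz := congrArg derivative^[i + 1] hshift
    rw [mul_comm X, add_mul, iterate_map_add, mul_comm X, iterate_derivative_mul_X,
      iterate_derivative_mul_X, iterate_derivative_natCast_mul] at hleibniz
    simp only [Nat.add_sub_cancel, nsmul_eq_mul] at hleibniz
    have hsum : ∑ j ∈ Finset.range (i + 1), (-1) ^ (i + 1 - j) *
          ((i + 1).descFactorial (i + 1 - j) : R[X]) * X ^ j * derivative^[j] (ascPochhammer R n) =
        -(i + 1 : R[X]) * ∑ j ∈ Finset.range (i + 1), (-1) ^ (i - j) *
          (i.descFactorial (i - j) : R[X]) * X ^ j * derivative^[j] (ascPochhammer R n) := by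
      rw [Finset.mul_sum]
      refine Finset.sum_congr rfl fun j hj => ?_
      rw [Nat.sub_add_comm (Finset.mem_range_succ_iff.1 hj), Nat.succ_descFactorial_succ, pow_succ]
      push_cast
      ring
    rw [Finset.sum_range_succ, hsum]
    push_cast at hleibniz ⊢
    simp only [Nat.sub_self, pow_zero, Nat.descFactorial_zero, Nat.cast_one]
    linear_combination X ^ (i + 1) * hleibniz - (i + 1) * ih

/-- The coefficients of the relation `∑ j ≤ M, shiftCoeff n A M j * D^j u = 0` obtained from
`∑ i ≤ M, A i * D^i u = 0`, where `u = ascPochhammer R n`, by substituting `X + 1` for `X`,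
multiplying by `X ^ (M + 1)` and rewriting the derivatives of `u(X + 1)`. -/
noncomputable def shiftCoeff (n : ℕ) (A : ℕ → R[X]) (M j : ℕ) : R[X] :=
  X ^ (M + 1) * (A j).comp (X + 1) + (n : R[X]) * X ^ j * ∑ i ∈ Finset.Icc j M,
    (-1) ^ (i - j) * (i.descFactorial (i - j) : R[X]) * (X ^ (M - i) * (A i).comp (X + 1))

lemma X_pow_mul_comp_iterate_derivative (n : ℕ) (p : R[X]) {i M : ℕ} (hi : i ≤ M) :
    X ^ (M + 1) * (p * derivative^[i] (ascPochhammer R n)).comp (X + 1) =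
      X ^ (M + 1) * p.comp (X + 1) * derivative^[i] (ascPochhammer R n) +
        ∑ j ∈ Finset.range (i + 1), (n : R[X]) * X ^ j *
          ((-1) ^ (i - j) * (i.descFactorial (i - j) : R[X]) * (X ^ (M - i) * p.comp (X + 1))) *
          derivative^[j] (ascPochhammer R n) := by
  set u := ascPochhammer R n
  obtain ⟨e, rfl⟩ := Nat.exists_eq_add_of_le hi
  have hsum : ∑ j ∈ Finset.range (i + 1), (n : R[X]) * X ^ j * ((-1) ^ (i - j) *
        (i.descFactorial (i - j) : R[X]) * (X ^ (i + e - i) * p.comp (X + 1))) *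
        derivative^[j] u =
      X ^ e * p.comp (X + 1) * ((n : R[X]) * ∑ j ∈ Finset.range (i + 1),
        (-1) ^ (i - j) * (i.descFactorial (i - j) : R[X]) * X ^ j * derivative^[j] u) := by
    rw [Finset.mul_sum, Finset.mul_sum, Nat.add_sub_cancel_left]
    exact Finset.sum_congr rfl fun j _ => by ring
  have hshift := X_pow_mul_iterate_derivative_ascPochhammer_comp R n i
  rw [hsum, mul_comp]
  linear_combination X ^ e * p.comp (X + 1) * hshift

lemma sum_shiftCoeff_mul (n M : ℕ) (A : ℕ → R[X]) :
    ∑ j ∈ Finset.range (M + 1), shiftCoeff n A M j * derivative^[j] (ascPochhammer R n) =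
      X ^ (M + 1) *
        (∑ i ∈ Finset.range (M + 1), A i * derivative^[i] (ascPochhammer R n)).comp (X + 1) := by
  rw [Polynomial.sum_comp, Finset.mul_sum, Finset.sum_congr rfl fun i hi =>
      X_pow_mul_comp_iterate_derivative n (A i) (Finset.mem_range_succ_iff.1 hi),
    Finset.sum_add_distrib, Finset.sum_comm' (t' := Finset.range (M + 1))
      (s' := fun j => Finset.Icc j M) (by simp only [Finset.mem_range, Finset.mem_Icc]; lia),
    ← Finset.sum_add_distrib]
  refine Finset.sum_congr rfl fun j _ => ?_
  rw [shiftCoeff, add_mul, Finset.mul_sum, Finset.sum_mul]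

lemma shiftCoeff_self (n M : ℕ) (A : ℕ → R[X]) :
    shiftCoeff n A M M = X ^ M * (X + (n : R[X])) * (A M).comp (X + 1) := by
  simp only [shiftCoeff, Finset.Icc_self, Finset.sum_singleton, Nat.sub_self, pow_zero,
    Nat.descFactorial_zero, Nat.cast_one]
  ring

lemma shiftCoeff_succ_self (n M : ℕ) (A : ℕ → R[X]) :
    shiftCoeff n A (M + 1) M = X ^ M * ((A M).comp (X + 1) * (X * (X + (n : R[X]))) -
      C ((M + 1 : R) * n) * (A (M + 1)).comp (X + 1)) := by
  have hIcc : Finset.Icc M (M + 1) = {M, M + 1} := by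
    ext i
    simp only [Finset.mem_Icc, Finset.mem_insert, Finset.mem_singleton]
    lia
  rw [shiftCoeff, hIcc, Finset.sum_pair (by lia), Nat.sub_self, Nat.sub_self,
    Nat.add_sub_cancel_left, Nat.descFactorial_zero, Nat.descFactorial_one]
  simp only [C_mul, C_add, C_1, C_eq_natCast]
  push_cast
  ring

lemma natDegree_shiftCoeff_le {n M D : ℕ} {A : ℕ → R[X]} (hA : ∀ i ≤ M, (A i).natDegree ≤ D)
    {j : ℕ} (hj : j ≤ M) : (shiftCoeff n A M j).natDegree ≤ M + 1 + D := by
  have hτ : ∀ i ≤ M, ((A i).comp (X + 1)).natDegree ≤ D := fun i hi => by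
    exact (natDegree_comp_X_add_one_le _).trans (hA i hi)
  refine natDegree_add_le_of_degree_le
    (natDegree_mul_le_of_le (natDegree_X_pow_le _) (hτ j hj)) ?_
  rw [Finset.mul_sum]
  refine natDegree_sum_le_of_forall_le _ _ fun i hi => ?_
  obtain ⟨hji, hiM⟩ := Finset.mem_Icc.1 hi
  have hscalar : ((-1) ^ (i - j) * (i.descFactorial (i - j) : R[X])).natDegree ≤ 0 := by
    compute_degree
  have hXj : ((n : R[X]) * X ^ j).natDegree ≤ j := by compute_degree
  refine (natDegree_mul_le_of_le hXj (natDegree_mul_le_of_le hscalar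
    (natDegree_mul_le_of_le (natDegree_X_pow_le (M - i)) (hτ i hiM)))).trans ?_
  lia

/-- The coefficients of the combination of a relation `∑ i ≤ M, A i * D^i u = 0` and of its shift
in which the coefficient of `D^M u` cancels. -/
noncomputable def elimCoeff (n : ℕ) (A : ℕ → R[X]) (M j : ℕ) : R[X] :=
  A M * shiftCoeff n A M j - X ^ M * (X + (n : R[X])) * (A M).comp (X + 1) * A j

lemma sum_elimCoeff_mul_eq_zero {n M : ℕ} {A : ℕ → R[X]}
    (h : ∑ i ∈ Finset.range (M + 1), A i * derivative^[i] (ascPochhammer R n) = 0) :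
    ∑ j ∈ Finset.range M, elimCoeff n A M j * derivative^[j] (ascPochhammer R n) = 0 := by
  have htop : elimCoeff n A M M = 0 := by rw [elimCoeff, shiftCoeff_self]; ring
  calc ∑ j ∈ Finset.range M, elimCoeff n A M j * derivative^[j] (ascPochhammer R n)
      = ∑ j ∈ Finset.range (M + 1), elimCoeff n A M j * derivative^[j] (ascPochhammer R n) := by
        rw [Finset.sum_range_succ, htop, zero_mul, add_zero]
    _ = A M * ∑ j ∈ Finset.range (M + 1), shiftCoeff n A M j *
            derivative^[j] (ascPochhammer R n) -
          X ^ M * (X + (n : R[X])) * (A M).comp (X + 1) *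
            ∑ j ∈ Finset.range (M + 1), A j * derivative^[j] (ascPochhammer R n) := by
        simp only [elimCoeff, sub_mul, Finset.sum_sub_distrib, Finset.mul_sum, mul_assoc]
    _ = 0 := by rw [sum_shiftCoeff_mul, h, zero_comp, mul_zero, mul_zero, mul_zero, sub_zero]

lemma natDegree_elimCoeff_le {n M D : ℕ} {A : ℕ → R[X]} (hA : ∀ i ≤ M, (A i).natDegree ≤ D)
    {j : ℕ} (hj : j ≤ M) : (elimCoeff n A M j).natDegree ≤ M + 1 + 2 * D := by
  have hX : (X ^ M * (X + (n : R[X]))).natDegree ≤ M + 1 := by compute_degree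
  have hτ : ((A M).comp (X + 1)).natDegree ≤ D := by
    exact (natDegree_comp_X_add_one_le _).trans (hA M le_rfl)
  refine (natDegree_sub_le_of_le
    (natDegree_mul_le_of_le (hA M le_rfl) (natDegree_shiftCoeff_le hA hj))
    (natDegree_mul_le_of_le (natDegree_mul_le_of_le hX hτ) (hA j hj))).trans ?_
  lia

variable (R) in
/-- The functions `R → R` given by a polynomial of degree at most `D`. -/
noncomputable def polynomialFunctions (D : ℕ) : Submodule R (R → R) :=
  (degreeLE R D).map (aeval (id : R → R)).toLinearMap

lemma mem_polynomialFunctions {D : ℕ} {f : R → R} :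
    f ∈ polynomialFunctions R D ↔ ∃ p : R[X], p.natDegree ≤ D ∧ ∀ x, p.eval x = f x := by
  simp [polynomialFunctions, mem_degreeLE, natDegree_le_iff_degree_le, funext_iff,
    aeval_fn_apply]

variable {K : Type*} [Field K] [CharZero K]

lemma exists_forall_ge_eval_natCast_ne_zero {p : K[X]} (hp : p ≠ 0) :
    ∃ n₀ : ℕ, ∀ n ≥ n₀, p.eval (n : K) ≠ 0 := by
  have hfin : {n : ℕ | p.IsRoot n}.Finite :=
    (finite_setOfPred_isRoot hp).preimage Nat.cast_injective.injOn
  obtain ⟨b, hb⟩ := hfin.bddAbove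
  exact ⟨b + 1, fun n hn h0 => absurd (hb h0) (by lia)⟩

lemma eq_zero_of_forall_ge_eval_natCast {p : K[X]} {n₀ : ℕ}
    (h : ∀ n ≥ n₀, p.eval (n : K) = 0) : p = 0 := by
  by_contra hp
  obtain ⟨n₁, hn₁⟩ := exists_forall_ge_eval_natCast_ne_zero hp
  exact hn₁ (max n₀ n₁) (le_max_right _ _) (h _ (le_max_left _ _))

lemma exists_eq_C_mul_of_comp_X_add_one {p q : K[X]} (hq : q ≠ 0)
    (h : p.comp (X + 1) * q = p * q.comp (X + 1)) : ∃ c : K, p = C c * q := by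
  obtain ⟨n₀, hn₀⟩ := exists_forall_ge_eval_natCast_ne_zero hq
  set c := p.eval (n₀ : K) / q.eval (n₀ : K)
  refine ⟨c, sub_eq_zero.1 (eq_zero_of_forall_ge_eval_natCast (n₀ := n₀) fun n hn => ?_)⟩
  rw [eval_sub, eval_mul, eval_C, sub_eq_zero]
  induction n, hn using Nat.le_induction with
  | base => exact (div_mul_cancel₀ _ (hn₀ n₀ le_rfl)).symm
  | succ n hn ih =>
    have hshift := congrArg (eval (n : K)) h
    simp only [eval_mul, eval_comp, eval_add, eval_X, eval_one, ih] at hshift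
    push_cast
    exact mul_right_cancel₀ (hn₀ n hn) (by linear_combination hshift)

variable (K) in
lemma separable_ascPochhammer (n : ℕ) : (ascPochhammer K n).Separable := by
  rw [ascPochhammer_eq_prod]
  exact separable_prod_X_sub_C_iff'.2 fun _ _ _ _ h => Nat.cast_injective (neg_injective h)

/- Dividing by `a · X(X + n)`, the hypothesis says that `f = b / a` satisfies
`f(X + 1) - f = c n / (X (X + n))`. So does `-c u'/u` for `u = ascPochhammer K n`, hence the two
differ by a constant, and `f` would have all `n` roots of `u` as poles. -/
lemma eq_zero_of_shift_equation {n : ℕ} {c : K} (hc : c ≠ 0) {a b : K[X]} (ha : a.natDegree < n)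
    (h : a * (b.comp (X + 1) * (X * (X + (n : K[X]))) - C (c * n) * a.comp (X + 1)) =
      a.comp (X + 1) * (X * (X + (n : K[X])) * b)) : a = 0 := by
  by_contra ha₀
  set u := ascPochhammer K n
  have hu : u ≠ 0 := (monic_ascPochhammer K n).ne_zero
  have hτu : X * u.comp (X + 1) = (X + (n : K[X])) * u := X_mul_ascPochhammer_comp_X_add_one K n
  have hτu' : u.comp (X + 1) + X * (derivative u).comp (X + 1) =
      u + (X + (n : K[X])) * derivative u := by
    simpa [derivative_mul, derivative_comp] using congrArg derivative hτu
  obtain ⟨d, hd⟩ := exists_eq_C_mul_of_comp_X_add_one (p := b * u + C c * (derivative u * a))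
    (mul_ne_zero hu ha₀) <| by
      refine mul_left_cancel₀ (pow_ne_zero 2 X_ne_zero) ?_
      simp only [mul_comp, add_comp, C_comp]
      generalize u.comp (X + 1) = τu, (derivative u).comp (X + 1) = τu' at *
      rw [C_mul, C_eq_natCast] at h
      linear_combination u ^ 2 * h + (X * b.comp (X + 1) * u * a -
        X * (b * u + C c * derivative u * a) * a.comp (X + 1) - C c * a.comp (X + 1) * u * a) * hτu
        + X * u * a * C c * a.comp (X + 1) * hτu'
  have hdvd : u ∣ derivative u * a := by
    refine (isUnit_C.2 hc.isUnit).dvd_mul_left.1 ⟨C d * a - b, ?_⟩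
    linear_combination hd
  refine ha₀ (eq_zero_of_dvd_of_natDegree_lt
    ((separable_ascPochhammer K n).dvd_of_dvd_mul_left hdvd) ?_)
  rwa [ascPochhammer_natDegree]

lemma eq_zero_of_elimCoeff_eq_zero {n M : ℕ} {A : ℕ → K[X]} (hA : (A (M + 1)).natDegree < n)
    (h : elimCoeff n A (M + 1) M = 0) : A (M + 1) = 0 := by
  refine eq_zero_of_shift_equation (b := A M) (Nat.cast_add_one_ne_zero M) hA
    (mul_left_cancel₀ (pow_ne_zero M X_ne_zero) ?_)
  rw [elimCoeff, shiftCoeff_succ_self] at h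
  linear_combination h

variable (K) in
theorem eventually_iterate_derivative_ascPochhammer_independent (N D : ℕ) :
    ∀ᶠ n in atTop, ∀ A : ℕ → K[X], (∀ i < N, (A i).natDegree ≤ D) →
      ∑ i ∈ Finset.range N, A i * derivative^[i] (ascPochhammer K n) = 0 → ∀ i < N, A i = 0 := by
  induction N generalizing D with
  | zero => exact .of_forall fun n A _ _ i hi => absurd hi i.not_lt_zero
  | succ M ih =>
    filter_upwards [ih D, ih (M + 1 + 2 * D), eventually_gt_atTop D] with n hD helim hn A hA hsum
    have hA' : ∀ i ≤ M, (A i).natDegree ≤ D := fun i hi => hA i (Nat.lt_succ_of_le hi)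
    have htop : A M = 0 := by
      cases M with
      | zero => simpa [(monic_ascPochhammer K n).ne_zero] using hsum
      | succ M =>
        exact eq_zero_of_elimCoeff_eq_zero ((hA' _ le_rfl).trans_lt hn)
          (helim _ (fun j hj => natDegree_elimCoeff_le hA' hj.le) (sum_elimCoeff_mul_eq_zero hsum)
            M M.lt_succ_self)
    rw [Finset.sum_range_succ, htop, zero_mul, add_zero] at hsum
    intro i hi
    obtain hi | rfl := Nat.lt_succ_iff_lt_or_eq.1 hi
    · exact hD A (fun i hi => hA' i hi.le) hsum i hi
    · exact htop

variable (K) in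
lemma eventually_eval_iterate_derivative_ascPochhammer_independent (N D : ℕ) :
    ∀ᶠ n in atTop, ∀ g : ℕ → K → K, (∀ i < N, g i ∈ polynomialFunctions K D) →
      (∀ x, ∑ i ∈ Finset.range N, g i x * (derivative^[i] (ascPochhammer K n)).eval x = 0) →
      ∀ i < N, g i = 0 := by
  filter_upwards [eventually_iterate_derivative_ascPochhammer_independent K N D] with n hn
  intro g hg hsum
  choose! A hA hgA using fun i hi => mem_polynomialFunctions.1 (hg i hi)
  have hA₀ := hn A hA <| Polynomial.funext fun x => by
    rw [eval_finsetSum, eval_zero, ← hsum x]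
    refine Finset.sum_congr rfl fun i hi => ?_
    rw [eval_mul, hgA i (Finset.mem_range.1 hi)]
  intro i hi
  ext x
  rw [← hgA i hi, hA₀ i hi, eval_zero, Pi.zero_apply]

variable (K) in
theorem eventually_iterate_derivative_ascPochhammer_independent₂ (N D : ℕ) :
    ∀ᶠ n in atTop, ∀ g : ℕ → ℕ → K → K → K,
      (∀ i < N, ∀ j < N, ∀ β, (g i j · β) ∈ polynomialFunctions K D) →
      (∀ i < N, ∀ j < N, ∀ α, g i j α ∈ polynomialFunctions K D) →
      (∀ α β, ∑ i ∈ Finset.range N, ∑ j ∈ Finset.range N,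
        g i j α β * ((derivative^[i] (ascPochhammer K n)).eval α *
          (derivative^[j] (ascPochhammer K n)).eval β) = 0) →
      ∀ i < N, ∀ j < N, g i j = 0 := by
  filter_upwards [eventually_eval_iterate_derivative_ascPochhammer_independent K N D] with n hn
  intro g hgα hgβ hsum
  set u := ascPochhammer K n
  let G (β : K) (i : ℕ) : K → K :=
    ∑ j ∈ Finset.range N, (derivative^[j] u).eval β • (g i j · β)
  have hG : ∀ β, ∀ i < N, G β i = 0 := fun β => by
    refine hn _ (fun i hi => Submodule.sum_mem _ fun j hj =>
      Submodule.smul_mem _ _ (hgα i hi j (Finset.mem_range.1 hj) β)) fun α => ?_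
    rw [← hsum α β]
    refine Finset.sum_congr rfl fun i _ => ?_
    simp only [G, Finset.sum_apply, Pi.smul_apply, smul_eq_mul, Finset.sum_mul]
    exact Finset.sum_congr rfl fun j _ => by ring
  intro i hi j hj
  ext1 α
  refine hn (fun j => g i j α) (fun j hj => hgβ i hi j hj α) (fun β => ?_) j hj
  have hGα := congrFun (hG β i hi) α
  simp only [G, Finset.sum_apply, Pi.smul_apply, smul_eq_mul, Pi.zero_apply] at hGα
  simpa only [mul_comm] using hGα

end Pochhammer

section Taylor

variable {σ R S : Type*} [CommRing R] [CommRing S] [Algebra R S]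

open MvPolynomial

lemma coeff_aeval_mem {ξ : Type*} (A : Subalgebra R (ξ → R)) (y : ξ → σ → PowerSeries R) {n : ℕ}
    (hy : ∀ s, ∀ a ≤ n, (fun x => PowerSeries.coeff a (y x s)) ∈ A) (P : MvPolynomial σ R) :
    (fun x => PowerSeries.coeff n (aeval (y x) P)) ∈ A := by
  suffices h : ∀ a ≤ n, (fun x => PowerSeries.coeff a (aeval (y x) P)) ∈ A from h n le_rfl
  induction P using MvPolynomial.induction_on with
  | C c =>
    intro a _
    convert A.algebraMap_mem (PowerSeries.coeff a (PowerSeries.C c)) using 1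
    ext x
    simp
  | add P Q hP hQ =>
    intro a ha
    simp only [map_add]
    exact A.add_mem (hP a ha) (hQ a ha)
  | mul_X P s hP =>
    intro a ha
    have hsum := A.sum_mem fun ab (hab : ab ∈ Finset.HasAntidiagonal.antidiagonal a) =>
      have hle := Finset.HasAntidiagonal.mem_antidiagonal.1 hab
      A.mul_mem (hP ab.1 (by lia)) (hy s ab.2 (by lia))
    convert hsum using 1
    ext x
    simp [PowerSeries.coeff_mul]

lemma dvd_aeval_add_sub_aeval {d : S} {y h : σ → S} (hd : ∀ s, d ∣ h s) (P : MvPolynomial σ R) :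
    d ∣ aeval (y + h) P - aeval y P := by
  rw [← Ideal.mem_span_singleton, ← Ideal.Quotient.mk_eq_mk_iff_sub_mem,
    ← Ideal.Quotient.mkₐ_eq_mk R, comp_aeval_apply, comp_aeval_apply]
  congr 2
  ext s
  simpa [Ideal.Quotient.eq_zero_iff_dvd] using hd s

lemma sq_dvd_aeval_add_sub_taylor {d : S} {y h : σ → S} (hd : ∀ s, d ∣ h s) {T : Finset σ}
    {P : MvPolynomial σ R} (hP : P ∈ supported R (T : Set σ)) :
    d ^ 2 ∣ aeval (y + h) P - aeval y P - ∑ s ∈ T, aeval y (pderiv s P) * h s := by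
  classical
  rw [supported_eq_adjoin_X] at hP
  induction hP using Algebra.adjoin_induction with
  | mem P hP =>
    obtain ⟨r, hr, rfl⟩ := hP
    simp [pderiv_X, Pi.single_apply, Finset.mem_coe.1 hr]
  | algebraMap c => simp [MvPolynomial.algebraMap_eq]
  | add P Q _ _ hP hQ =>
    convert dvd_add hP hQ using 1
    simp only [map_add, add_mul, Finset.sum_add_distrib]
    ring
  | mul P Q _ _ hP hQ =>
    have hPQ : d ^ 2 ∣ (aeval (y + h) P - aeval y P) * (aeval (y + h) Q - aeval y Q) :=
      sq d ▸ mul_dvd_mul (dvd_aeval_add_sub_aeval hd P) (dvd_aeval_add_sub_aeval hd Q)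
    convert dvd_add (dvd_add (hP.mul_right (aeval y Q)) (hQ.mul_left (aeval y P))) hPQ using 1
    have hsum : ∑ s ∈ T, aeval y (pderiv s (P * Q)) * h s =
        (∑ s ∈ T, aeval y (pderiv s P) * h s) * aeval y Q +
          aeval y P * ∑ s ∈ T, aeval y (pderiv s Q) * h s := by
      rw [Finset.sum_mul, Finset.mul_sum, ← Finset.sum_add_distrib]
      refine Finset.sum_congr rfl fun s _ => ?_
      rw [pderiv_mul, map_add, map_mul, map_mul]
      ring
    rw [hsum, map_mul, map_mul]
    ring

/- The terms of order two in the tails `X ^ d * t s` only start at order `2 * d > d + v`. -/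
lemma coeff_aeval_add_X_pow_mul {y t : σ → PowerSeries R} {T : Finset σ} {P : MvPolynomial σ R}
    (hP : P ∈ supported R (T : Set σ)) {d v : ℕ} (hv : v < d)
    (hX : ∀ s, t s ≠ 0 → PowerSeries.X ^ v ∣ aeval y (pderiv s P)) :
    PowerSeries.coeff (d + v) (aeval (y + fun s => PowerSeries.X ^ d * t s) P) =
      PowerSeries.coeff (d + v) (aeval y P) + ∑ s ∈ T,
        PowerSeries.coeff v (aeval y (pderiv s P)) * PowerSeries.coeff 0 (t s) := by
  have htaylor := sq_dvd_aeval_add_sub_taylor (y := y) (fun s => Dvd.intro (t s) rfl) hP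
    (d := PowerSeries.X ^ d)
  rw [← pow_mul, PowerSeries.X_pow_dvd_iff] at htaylor
  have hcoeff := htaylor (d + v) (by lia)
  rw [map_sub, map_sub, sub_sub, sub_eq_zero, map_sum] at hcoeff
  rw [hcoeff]
  congr 1
  refine Finset.sum_congr rfl fun s _ => ?_
  rcases eq_or_ne (t s) 0 with hts | hts
  · simp [hts]
  obtain ⟨q, hq⟩ := hX s hts
  rw [hq, show PowerSeries.X ^ v * q * (PowerSeries.X ^ d * t s) =
    PowerSeries.X ^ (d + v) * (q * t s) by ring, PowerSeries.coeff_X_pow_mul',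
    PowerSeries.coeff_X_pow_mul', if_pos le_rfl, if_pos le_rfl]
  simp

end Taylor

section PoleOrder

open Polynomial Filter Topology

section Field

variable {K : Type*} [Field K]

/-- The numerator `q` in `(1 / p)⁽ᵏ⁾ = q / p ^ (k + 1)`. -/
noncomputable def invDerivNum (p : K[X]) : ℕ → K[X]
  | 0 => 1
  | k + 1 => derivative (invDerivNum p k) * p - (k + 1 : K[X]) * invDerivNum p k * derivative p

lemma eval_invDerivNum_ne_zero [CharZero K] {p : K[X]} {z : K} (hz : p.eval z = 0)
    (hz' : (derivative p).eval z ≠ 0) (k : ℕ) : (invDerivNum p k).eval z ≠ 0 := by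
  induction k with
  | zero => simp [invDerivNum]
  | succ k ih => simp [invDerivNum, hz, hz', ih, Nat.cast_add_one_ne_zero]

lemma ascPochhammer_dvd_of_le {m n : ℕ} (h : m ≤ n) : ascPochhammer K m ∣ ascPochhammer K n := by
  obtain ⟨d, rfl⟩ := Nat.exists_eq_add_of_le h
  exact ascPochhammer_mul K m d ▸ dvd_mul_right _ _

lemma eval_ascPochhammer_neg_natCast_ne_zero [CharZero K] {n m : ℕ} (h : n ≤ m) :
    (ascPochhammer K n).eval (-(m : K)) ≠ 0 := by
  rw [Ne, ascPochhammer_eval_eq_zero_iff]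
  rintro ⟨l, hl, hlm⟩
  rw [neg_neg, Nat.cast_inj] at hlm
  lia

end Field

variable {𝕜 : Type*} [NontriviallyNormedField 𝕜]

lemma tendsto_sub_div_eval {p : 𝕜[X]} {z : 𝕜} (hz : p.eval z = 0)
    (hz' : (derivative p).eval z ≠ 0) :
    Tendsto (fun x => (x - z) / p.eval x) (𝓝[≠] z) (𝓝 ((derivative p).eval z)⁻¹) := by
  refine ((hasDerivAt_iff_tendsto_slope.1 (p.hasDerivAt z)).inv₀ hz').congr fun x => ?_
  rw [slope_def_field, hz, sub_zero, inv_div]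

lemma tendsto_pow_mul_invDerivNum_div {p : 𝕜[X]} {z : 𝕜} (hz : p.eval z = 0)
    (hz' : (derivative p).eval z ≠ 0) (k : ℕ) :
    Tendsto (fun x => (x - z) ^ (k + 1) * ((invDerivNum p k).eval x / p.eval x ^ (k + 1)))
      (𝓝[≠] z) (𝓝 (((derivative p).eval z)⁻¹ ^ (k + 1) * (invDerivNum p k).eval z)) := by
  refine (((tendsto_sub_div_eval hz hz').pow (k + 1)).mul
    ((invDerivNum p k).continuous.tendsto z |>.mono_left nhdsWithin_le_nhds)).congr fun x => ?_
  rw [div_pow]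
  ring

end PoleOrder

section Coefficients

open Polynomial Filter Topology

/-- The coefficient of `xⁿ` in the hypergeometric series differentiated `s = (i, j, k)` times with
respect to the parameters, as a function of `θ = (α, β, γ)`. -/
noncomputable def hgCoeff (s : ℕ × ℕ × ℕ) (n : ℕ) (θ : Fin 3 → ℂ) : ℂ :=
  (derivative^[s.1] (ascPochhammer ℂ n)).eval (θ 0) *
    (derivative^[s.2.1] (ascPochhammer ℂ n)).eval (θ 1) *
    ((invDerivNum (ascPochhammer ℂ n) s.2.2).eval (θ 2) /
      (ascPochhammer ℂ n).eval (θ 2) ^ (s.2.2 + 1)) / n.factorial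

lemma exists_tendsto_pow_mul_hgCoeff {m n : ℕ} (h : m < n) (k : ℕ) :
    ∃ L : ℂ, L ≠ 0 ∧ ∀ i j α β,
      Tendsto (fun γ => (γ + m) ^ (k + 1) * hgCoeff (i, j, k) n ![α, β, γ]) (𝓝[≠] (-(m : ℂ)))
        (𝓝 (L * ((derivative^[i] (ascPochhammer ℂ n)).eval α *
          (derivative^[j] (ascPochhammer ℂ n)).eval β))) := by
  have hroot : (ascPochhammer ℂ n).eval (-(m : ℂ)) = 0 := ascPochhammer_eval_neg_coe_nat_of_lt h
  have hsimple : (derivative (ascPochhammer ℂ n)).eval (-(m : ℂ)) ≠ 0 :=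
    (separable_ascPochhammer ℂ n).eval₂_derivative_ne_zero (RingHom.id ℂ) hroot
  have hnum := eval_invDerivNum_ne_zero hroot hsimple k
  refine ⟨_, div_ne_zero (mul_ne_zero (pow_ne_zero (k + 1) (inv_ne_zero hsimple)) hnum)
    (Nat.cast_ne_zero.2 n.factorial_ne_zero), fun i j α β => ?_⟩
  convert ((tendsto_pow_mul_invDerivNum_div hroot hsimple k).div_const (n.factorial : ℂ)).mul_const
    ((derivative^[i] (ascPochhammer ℂ n)).eval α *
      (derivative^[j] (ascPochhammer ℂ n)).eval β) using 2 with γ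
  simp only [hgCoeff, Matrix.cons_val, sub_neg_eq_add]
  ring

lemma eval_aeval_X (θ : Fin 3 → ℂ) (i : Fin 3) (p : ℂ[X]) :
    MvPolynomial.eval θ (aeval (MvPolynomial.X i) p) = p.eval (θ i) := by
  rw [← MvPolynomial.coe_aeval_eq_eval, RingHom.coe_coe, ← aeval_algHom_apply,
    MvPolynomial.aeval_X, coe_aeval_eq_eval]

/-- The functions of `θ = (α, β, γ)` that are rational with denominator a power of `(γ)ᵥ`, with
arbitrary values where `(γ)ᵥ = 0`. -/
noncomputable def rationalFunctions (v : ℕ) : Subalgebra ℂ ((Fin 3 → ℂ) → ℂ) where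
  carrier := {g | ∃ (D : ℕ) (Q : MvPolynomial (Fin 3) ℂ), ∀ θ,
    (ascPochhammer ℂ v).eval (θ 2) ≠ 0 →
      g θ = MvPolynomial.eval θ Q / (ascPochhammer ℂ v).eval (θ 2) ^ D}
  mul_mem' := by
    rintro g g' ⟨D, Q, hg⟩ ⟨D', Q', hg'⟩
    refine ⟨D + D', Q * Q', fun θ hθ => ?_⟩
    rw [Pi.mul_apply, hg θ hθ, hg' θ hθ, map_mul, pow_add, div_mul_div_comm]
  add_mem' := by
    rintro g g' ⟨D, Q, hg⟩ ⟨D', Q', hg'⟩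
    refine ⟨D + D', Q * aeval (MvPolynomial.X 2) (ascPochhammer ℂ v ^ D') +
      aeval (MvPolynomial.X 2) (ascPochhammer ℂ v ^ D) * Q', fun θ hθ => ?_⟩
    rw [Pi.add_apply, hg θ hθ, hg' θ hθ, div_add_div _ _ (pow_ne_zero _ hθ) (pow_ne_zero _ hθ)]
    simp only [map_add, map_mul, eval_aeval_X, eval_pow, pow_add]
  algebraMap_mem' := fun c => ⟨0, MvPolynomial.C c, fun θ _ => by simp⟩

lemma eval_mem_rationalFunctions (v : ℕ) (i : Fin 3) (p : ℂ[X]) :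
    (fun θ => p.eval (θ i)) ∈ rationalFunctions v :=
  ⟨0, aeval (MvPolynomial.X i) p, fun θ _ => by rw [eval_aeval_X, pow_zero, div_one]⟩

lemma inv_ascPochhammer_mem_rationalFunctions {n v : ℕ} (h : n ≤ v) :
    (fun θ => ((ascPochhammer ℂ n).eval (θ 2))⁻¹) ∈ rationalFunctions v := by
  obtain ⟨q, hq⟩ := ascPochhammer_dvd_of_le (K := ℂ) h
  refine ⟨1, aeval (MvPolynomial.X 2) q, fun θ hθ => ?_⟩
  rw [hq, eval_mul, mul_ne_zero_iff] at hθ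
  rw [eval_aeval_X, hq, eval_mul, pow_one, div_mul_cancel_right₀ hθ.2]

lemma hgCoeff_mem_rationalFunctions (s : ℕ × ℕ × ℕ) {n v : ℕ} (h : n ≤ v) :
    hgCoeff s n ∈ rationalFunctions v := by
  convert (rationalFunctions v).smul_mem (mul_mem (mul_mem
    (eval_mem_rationalFunctions v 0 (derivative^[s.1] (ascPochhammer ℂ n)))
    (eval_mem_rationalFunctions v 1 (derivative^[s.2.1] (ascPochhammer ℂ n))))
    (mul_mem (eval_mem_rationalFunctions v 2 (invDerivNum (ascPochhammer ℂ n) s.2.2))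
      (pow_mem (inv_ascPochhammer_mem_rationalFunctions h) (s.2.2 + 1))))
    (n.factorial : ℂ)⁻¹ using 1
  ext θ
  simp only [hgCoeff, Pi.smul_apply, Pi.mul_apply, Pi.pow_apply, smul_eq_mul, inv_pow]
  ring

lemma tendsto_of_mem_rationalFunctions {g : (Fin 3 → ℂ) → ℂ} {v m : ℕ}
    (hg : g ∈ rationalFunctions v) (h : v ≤ m) (α β : ℂ) :
    Tendsto (fun γ => g ![α, β, γ]) (𝓝[≠] (-(m : ℂ))) (𝓝 (g ![α, β, -m])) := by
  obtain ⟨D, Q, hg⟩ := hg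
  have hm := eval_ascPochhammer_neg_natCast_ne_zero (K := ℂ) h
  have hcont : ContinuousAt (fun γ => MvPolynomial.eval ![α, β, γ] Q /
      (ascPochhammer ℂ v).eval γ ^ D) (-(m : ℂ)) := by
    refine ContinuousAt.div ?_ (by fun_prop) (pow_ne_zero D hm)
    exact (MvPolynomial.continuous_eval Q |>.comp (by fun_prop)).continuousAt
  rw [hg ![α, β, -m] hm]
  refine (hcont.mono_left nhdsWithin_le_nhds).congr' ?_
  have hne := (ascPochhammer ℂ v).continuous.continuousAt.eventually_ne hm
  filter_upwards [hne.filter_mono nhdsWithin_le_nhds] with γ hγ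
  exact (hg ![α, β, γ] hγ).symm

lemma eventually_mem_polynomialFunctions {g : (Fin 3 → ℂ) → ℂ} {v : ℕ}
    (hg : g ∈ rationalFunctions v) :
    ∀ᶠ D in atTop, ∀ a b : ℂ[X], a.natDegree ≤ 1 → b.natDegree ≤ 1 → ∀ γ,
      (ascPochhammer ℂ v).eval γ ≠ 0 →
        (fun t => g ![a.eval t, b.eval t, γ]) ∈ polynomialFunctions ℂ D := by
  obtain ⟨E, Q, hg⟩ := hg
  filter_upwards [eventually_ge_atTop Q.totalDegree] with D hD a b ha hb γ hγ
  refine mem_polynomialFunctions.2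
    ⟨C ((ascPochhammer ℂ v).eval γ ^ E)⁻¹ * MvPolynomial.aeval ![a, b, C γ] Q, ?_, fun t => ?_⟩
  · refine (natDegree_C_mul_le _ _).trans ?_
    simpa using MvPolynomial.aeval_natDegree_le Q hD ![a, b, C γ] (n := 1)
      (by simp [Fin.forall_fin_succ, ha, hb])
  · rw [hg _ hγ, eval_mul, eval_C, div_eq_inv_mul]
    rw [← coe_aeval_eq_eval t, MvPolynomial.comp_aeval_apply, ← MvPolynomial.coe_aeval_eq_eval,
      RingHom.coe_coe]
    congr 2
    ext i
    fin_cases i <;> simp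

lemma eq_zero_of_mem_rationalFunctions {g : (Fin 3 → ℂ) → ℂ} {v m₀ : ℕ}
    (hg : g ∈ rationalFunctions v) (hzero : ∀ m ≥ m₀, ∀ α β, g ![α, β, -(m : ℂ)] = 0)
    {θ : Fin 3 → ℂ} (hθ : (ascPochhammer ℂ v).eval (θ 2) ≠ 0) : g θ = 0 := by
  obtain ⟨D, Q, hg⟩ := hg
  suffices hQ : Q = 0 by rw [hg θ hθ, hQ, map_zero, zero_div]
  have hinf : (Set.range fun l : ℕ => -((m₀ + v + l : ℕ) : ℂ)).Infinite :=
    Set.infinite_range_of_injective fun l l' h => by simpa using h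
  refine MvPolynomial.funext_set ![Set.univ, Set.univ, _]
    (Fin.forall_fin_succ.2 ⟨Set.infinite_univ, Fin.forall_fin_succ.2 ⟨Set.infinite_univ,
      Fin.forall_fin_one.2 hinf⟩⟩) fun η hη => ?_
  obtain ⟨l, hl⟩ : ∃ l : ℕ, -((m₀ + v + l : ℕ) : ℂ) = η 2 := hη 2 trivial
  have hval : g η = 0 := by
    convert hzero (m₀ + v + l) (by lia) (η 0) (η 1) using 2
    ext i
    fin_cases i <;> simp [← hl]
  have hne : (ascPochhammer ℂ v).eval (η 2) ≠ 0 :=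
    hl ▸ eval_ascPochhammer_neg_natCast_ne_zero (by lia)
  rw [hg η hne, div_eq_zero_iff] at hval
  rw [map_zero, hval.resolve_right (pow_ne_zero D hne)]

end Coefficients

section Derivations

open MvPolynomial

variable {σ R : Type*} [CommSemiring R]

lemma totalDegree_pderiv_lt {P : MvPolynomial σ R} {s : σ} (h : pderiv s P ≠ 0) :
    (pderiv s P).totalDegree < P.totalDegree := by
  classical
  obtain ⟨m, hm⟩ := support_nonempty.2 h
  have hlt : ∀ m ∈ (pderiv s P).support, (m.sum fun _ e => e) < P.totalDegree := fun m hm => by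
    rw [mem_support_iff, coeff_pderiv] at hm
    have hle := le_totalDegree (mem_support_iff.2 (left_ne_zero_of_mul hm))
    rw [Finsupp.sum_add_index' (fun _ => rfl) fun _ _ _ => rfl, Finsupp.sum_single_index rfl] at hle
    lia
  exact (Finset.sup_lt_iff ((Nat.zero_le _).trans_lt (hlt m hm))).2 hlt

lemma notMem_vars_of_pderiv_eq_zero [NoZeroDivisors R] [CharZero R] {P : MvPolynomial σ R} {s : σ}
    (h : pderiv s P = 0) : s ∉ P.vars := by
  classical
  rw [mem_vars_iff_mem_support]
  rintro ⟨m, hm, hs⟩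
  have hadd : m - Finsupp.single s 1 + Finsupp.single s 1 = m :=
    tsub_add_cancel_of_le (Finsupp.single_le_iff.2
      (Nat.one_le_iff_ne_zero.2 (Finsupp.mem_support_iff.1 hs)))
  have hcoeff := coeff_pderiv (i := s) P (m - Finsupp.single s 1)
  rw [h, hadd, coeff_zero] at hcoeff
  exact mul_ne_zero (mem_support_iff.1 hm) (Nat.cast_add_one_ne_zero _) hcoeff.symm

end Derivations

section FormalRelations

open Polynomial Filter Topology

/-- The points `(α, β, γ)` at which the coefficients of the hypergeometric series have no pole. -/
def regularParameters : Set (Fin 3 → ℂ) := {θ | ∀ n : ℕ, θ 2 ≠ -n}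

lemma eval_ascPochhammer_ne_zero {θ : Fin 3 → ℂ} (hθ : θ ∈ regularParameters) (n : ℕ) :
    (ascPochhammer ℂ n).eval (θ 2) ≠ 0 := by
  rw [Ne, ascPochhammer_eval_eq_zero_iff]
  rintro ⟨l, -, hl⟩
  exact hθ l (by rw [hl, neg_neg])

lemma isOpen_forall_mem_ne_neg_natCast (S : Set ℕ) : IsOpen {γ : ℂ | ∀ n ∈ S, γ ≠ -n} := by
  have hclosed := (Complex.isometry_ofReal.isClosedEmbedding.comp
    Nat.isClosedEmbedding_coe_real).isClosedMap S (isClosed_discrete S)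
  convert (hclosed.preimage continuous_neg).isOpen_compl using 1
  ext γ
  simp [eq_comm (b := -γ), neg_eq_iff_eq_neg]

lemma isOpen_forall_ne_neg_natCast : IsOpen {γ : ℂ | ∀ n : ℕ, γ ≠ -n} := by
  simpa using isOpen_forall_mem_ne_neg_natCast Set.univ

lemma eventually_mem_regularParameters (m : ℕ) (α β : ℂ) :
    ∀ᶠ γ in 𝓝[≠] (-(m : ℂ)), ![α, β, γ] ∈ regularParameters := by
  have hopen := (isOpen_forall_mem_ne_neg_natCast {m}ᶜ).mem_nhds (x := -(m : ℂ))
    fun n hn h => hn (by simpa using h.symm)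
  filter_upwards [nhdsWithin_le_nhds hopen, self_mem_nhdsWithin] with γ hγ hγm n
  rcases eq_or_ne n m with rfl | hn
  · exact hγm
  · exact hγ n hn

/-- The expansions at `θ = (α, β, γ)`, as power series in `x`, of the coordinates `x, α, β, γ` and
of the parameter derivatives of the hypergeometric series. -/
noncomputable def hgExpansion (θ : Fin 3 → ℂ) : Fin 4 ⊕ ℕ × ℕ × ℕ → PowerSeries ℂ :=
  Sum.elim (Fin.cons PowerSeries.X fun i => PowerSeries.C (θ i))
    fun s => PowerSeries.mk fun n => hgCoeff s n θ

/-- A differential polynomial in the parameters that vanishes formally at the hypergeometric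
series. -/
def IsRelation (P : MvPolynomial (Fin 4 ⊕ ℕ × ℕ × ℕ) ℂ) : Prop :=
  ∀ θ ∈ regularParameters, MvPolynomial.aeval (hgExpansion θ) P = 0

/-- The coefficient of `xᵃ` in `∂P/∂Yₛ` evaluated at the hypergeometric series. -/
noncomputable def pderivCoeff (P : MvPolynomial (Fin 4 ⊕ ℕ × ℕ × ℕ) ℂ) (s : ℕ × ℕ × ℕ) (a : ℕ)
    (θ : Fin 3 → ℂ) : ℂ :=
  PowerSeries.coeff a (MvPolynomial.aeval (hgExpansion θ) (MvPolynomial.pderiv (Sum.inr s) P))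

/-- `hgExpansion` with the series of the parameter derivatives truncated after `xᵐ`, as a
perturbation of `hgExpansion`. -/
noncomputable def truncatedExpansion (m : ℕ) (θ : Fin 3 → ℂ) :
    Fin 4 ⊕ ℕ × ℕ × ℕ → PowerSeries ℂ :=
  hgExpansion θ + fun s => PowerSeries.X ^ (m + 1) *
    s.elim (fun _ => 0) fun s => -PowerSeries.mk fun n => hgCoeff s (m + 1 + n) θ

lemma coeff_truncatedExpansion_inr (m : ℕ) (θ : Fin 3 → ℂ) (s : ℕ × ℕ × ℕ) (a : ℕ) :
    PowerSeries.coeff a (truncatedExpansion m θ (Sum.inr s)) =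
      if a ≤ m then hgCoeff s a θ else 0 := by
  rw [truncatedExpansion, Pi.add_apply, map_add, PowerSeries.coeff_X_pow_mul']
  rcases le_or_gt a m with h | h
  · simp [hgExpansion, h]
  · simp [hgExpansion, h.not_ge, Nat.succ_le_iff.2 h]

lemma coeff_hgExpansion_inl_mem (i : Fin 4) (a v : ℕ) :
    (fun θ => PowerSeries.coeff a (hgExpansion θ (Sum.inl i))) ∈ rationalFunctions v := by
  refine Fin.cases ?_ (fun i => ?_) i
  · exact (rationalFunctions v).algebraMap_mem (PowerSeries.coeff a PowerSeries.X)
  · have h := eval_mem_rationalFunctions v i (if a = 0 then X else 0)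
    convert h using 2 with θ
    split_ifs <;> simp [hgExpansion, PowerSeries.coeff_C, *]

lemma pderivCoeff_mem_rationalFunctions (P : MvPolynomial (Fin 4 ⊕ ℕ × ℕ × ℕ) ℂ) (s : ℕ × ℕ × ℕ)
    (v : ℕ) : pderivCoeff P s v ∈ rationalFunctions v := by
  refine coeff_aeval_mem (rationalFunctions v) hgExpansion (fun s a ha => ?_) _
  rcases s with i | s
  · exact coeff_hgExpansion_inl_mem i a v
  · simpa [hgExpansion] using hgCoeff_mem_rationalFunctions s ha

lemma coeff_aeval_truncatedExpansion_mem (P : MvPolynomial (Fin 4 ⊕ ℕ × ℕ × ℕ) ℂ) (m n : ℕ) :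
    (fun θ => PowerSeries.coeff n (MvPolynomial.aeval (truncatedExpansion m θ) P)) ∈
      rationalFunctions m := by
  refine coeff_aeval_mem (rationalFunctions m) (truncatedExpansion m) (fun s a _ => ?_) P
  rcases s with i | s
  · simpa [truncatedExpansion] using coeff_hgExpansion_inl_mem i a m
  · simp only [coeff_truncatedExpansion_inr]
    split_ifs with ha
    · exact hgCoeff_mem_rationalFunctions s ha
    · exact (rationalFunctions m).zero_mem

/-- The index set of the variables of differential polynomials of order less than `N` in each of
the parameters. -/
def variablesLT (N : ℕ) : Finset (Fin 4 ⊕ ℕ × ℕ × ℕ) :=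
  Finset.univ.disjSum (Finset.range N ×ˢ Finset.range N ×ˢ Finset.range N)

lemma exists_mem_supported_variablesLT (P : MvPolynomial (Fin 4 ⊕ ℕ × ℕ × ℕ) ℂ) :
    ∃ N, P ∈ MvPolynomial.supported ℂ (variablesLT N : Set (Fin 4 ⊕ ℕ × ℕ × ℕ)) := by
  let order : Fin 4 ⊕ ℕ × ℕ × ℕ → ℕ := Sum.elim 0 fun s => s.1 + s.2.1 + s.2.2
  refine ⟨P.vars.sup order + 1, MvPolynomial.mem_supported.2 fun s hs => ?_⟩
  have hle : order s ≤ P.vars.sup order := Finset.le_sup hs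
  rcases s with i | s
  · simp [variablesLT]
  · change s.1 + s.2.1 + s.2.2 ≤ _ at hle
    simp only [variablesLT, Finset.mem_coe, Finset.inr_mem_disjSum, Finset.mem_product,
      Finset.mem_range]
    lia

lemma pderivCoeff_eq_zero_of_notMem {P : MvPolynomial (Fin 4 ⊕ ℕ × ℕ × ℕ) ℂ} {N : ℕ}
    (hP : P ∈ MvPolynomial.supported ℂ (variablesLT N : Set (Fin 4 ⊕ ℕ × ℕ × ℕ)))
    {s : ℕ × ℕ × ℕ} (hs : s ∉ Finset.range N ×ˢ Finset.range N ×ˢ Finset.range N) (a : ℕ) :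
    pderivCoeff P s a = 0 := by
  have hvars : Sum.inr s ∉ P.vars := fun h =>
    hs (Finset.inr_mem_disjSum.1 (MvPolynomial.mem_supported.1 hP h))
  ext θ
  simp [pderivCoeff, MvPolynomial.pderiv_eq_zero_of_notMem_vars hvars]

/- Only the leading term of each tail `xᵐ⁺¹ (⋯)` enters, as `∂P/∂Yₛ` has no term below `xᵛ`. -/
lemma coeff_aeval_truncatedExpansion {P : MvPolynomial (Fin 4 ⊕ ℕ × ℕ × ℕ) ℂ} (hP : IsRelation P)
    {N : ℕ} (hN : P ∈ MvPolynomial.supported ℂ (variablesLT N : Set (Fin 4 ⊕ ℕ × ℕ × ℕ)))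
    {v m : ℕ} (hv : v ≤ m) {θ : Fin 3 → ℂ} (hθ : θ ∈ regularParameters)
    (hlow : ∀ a < v, ∀ s, pderivCoeff P s a θ = 0) :
    PowerSeries.coeff (m + 1 + v) (MvPolynomial.aeval (truncatedExpansion m θ) P) =
      -∑ s ∈ Finset.range N ×ˢ Finset.range N ×ˢ Finset.range N,
        pderivCoeff P s v θ * hgCoeff s (m + 1) θ := by
  rw [truncatedExpansion, coeff_aeval_add_X_pow_mul hN (Nat.lt_succ_of_le hv), hP θ hθ, map_zero,
    zero_add, variablesLT, Finset.sum_disjSum]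
  · simp [pderivCoeff]
  · rintro (i | s) hs
    · exact absurd rfl hs
    · exact PowerSeries.X_pow_dvd_iff.2 fun a ha => hlow a ha s

lemma tendsto_add_natCast_pow (m : ℕ) (d : ℕ) :
    Tendsto (fun γ : ℂ => (γ + m) ^ (d + 1)) (𝓝[≠] (-(m : ℂ))) (𝓝 0) := by
  have hcont : Continuous fun γ : ℂ => (γ + m) ^ (d + 1) := by fun_prop
  simpa using (hcont.tendsto (-(m : ℂ))).mono_left nhdsWithin_le_nhds

lemma tendsto_pow_mul_hgCoeff_zero {m n : ℕ} (h : m < n) {k l : ℕ} (hlk : l < k) (i j : ℕ)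
    (α β : ℂ) :
    Tendsto (fun γ => (γ + m) ^ (k + 1) * hgCoeff (i, j, l) n ![α, β, γ]) (𝓝[≠] (-(m : ℂ)))
      (𝓝 0) := by
  obtain ⟨L, -, hL⟩ := exists_tendsto_pow_mul_hgCoeff h l
  obtain ⟨d, rfl⟩ := Nat.exists_eq_add_of_lt hlk
  convert (tendsto_add_natCast_pow m d).mul (hL i j α β) using 2 with γ
  · ring
  · rw [zero_mul]

lemma exists_tendsto_pderivCoeff_mul (P : MvPolynomial (Fin 4 ⊕ ℕ × ℕ × ℕ) ℂ) {v k m : ℕ}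
    (hhigh : ∀ l > k, ∀ i j, ∀ θ ∈ regularParameters, pderivCoeff P (i, j, l) v θ = 0)
    (hm : v ≤ m) (α β : ℂ) :
    ∃ L : ℂ, L ≠ 0 ∧ ∀ i j l, Tendsto (fun γ => pderivCoeff P (i, j, l) v ![α, β, γ] *
      ((γ + m) ^ (k + 1) * hgCoeff (i, j, l) (m + 1) ![α, β, γ])) (𝓝[≠] (-(m : ℂ)))
      (𝓝 (if k = l then L * (pderivCoeff P (i, j, k) v ![α, β, -m] *
        ((derivative^[i] (ascPochhammer ℂ (m + 1))).eval α *
          (derivative^[j] (ascPochhammer ℂ (m + 1))).eval β)) else 0)) := by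
  obtain ⟨L, hL, hlead⟩ := exists_tendsto_pow_mul_hgCoeff m.lt_succ_self k
  refine ⟨L, hL, fun i j l => ?_⟩
  have hcoeff := tendsto_of_mem_rationalFunctions
    (pderivCoeff_mem_rationalFunctions P (i, j, l) v) hm α β
  rcases lt_trichotomy l k with hlk | rfl | hkl
  · rw [if_neg hlk.ne']
    simpa using hcoeff.mul (tendsto_pow_mul_hgCoeff_zero m.lt_succ_self hlk i j α β)
  · rw [if_pos rfl, mul_left_comm]
    exact hcoeff.mul (hlead i j α β)
  · rw [if_neg hkl.ne]
    refine tendsto_const_nhds.congr' ?_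
    filter_upwards [eventually_mem_regularParameters m α β] with γ hγ
    rw [hhigh l hkl i j _ hγ, zero_mul]

lemma sum_pderivCoeff_mul_eq_zero {P : MvPolynomial (Fin 4 ⊕ ℕ × ℕ × ℕ) ℂ} (hP : IsRelation P)
    {N : ℕ} (hN : P ∈ MvPolynomial.supported ℂ (variablesLT N : Set (Fin 4 ⊕ ℕ × ℕ × ℕ)))
    {v k : ℕ} (hk : k < N) (hlow : ∀ a < v, ∀ s, ∀ θ ∈ regularParameters, pderivCoeff P s a θ = 0)
    (hhigh : ∀ l > k, ∀ i j, ∀ θ ∈ regularParameters, pderivCoeff P (i, j, l) v θ = 0)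
    {m : ℕ} (hm : v ≤ m) (α β : ℂ) :
    ∑ i ∈ Finset.range N, ∑ j ∈ Finset.range N, pderivCoeff P (i, j, k) v ![α, β, -m] *
      ((derivative^[i] (ascPochhammer ℂ (m + 1))).eval α *
        (derivative^[j] (ascPochhammer ℂ (m + 1))).eval β) = 0 := by
  obtain ⟨L, hL, hterm⟩ := exists_tendsto_pderivCoeff_mul P hhigh hm α β
  have hsum := tendsto_finsetSum (Finset.range N ×ˢ Finset.range N ×ˢ Finset.range N)
    fun s _ => hterm s.1 s.2.1 s.2.2
  have htrunc := (tendsto_add_natCast_pow m k).mul (tendsto_of_mem_rationalFunctions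
    (coeff_aeval_truncatedExpansion_mem P m (m + 1 + v)) le_rfl α β)
  have hlimit := tendsto_nhds_unique_of_eventuallyEq htrunc hsum.neg <| by
    filter_upwards [eventually_mem_regularParameters m α β] with γ hγ
    rw [coeff_aeval_truncatedExpansion hP hN hm hγ fun a ha s => hlow a ha s _ hγ, mul_neg,
      Finset.mul_sum]
    congr 1
    exact Finset.sum_congr rfl fun s _ => mul_left_comm _ _ _
  simp only [Finset.sum_product, Finset.sum_ite_eq, Finset.mem_range, hk, if_true, zero_mul,
    zero_eq_neg, ← Finset.mul_sum] at hlimit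
  exact (mul_eq_zero.1 hlimit).resolve_left hL

lemma pderivCoeff_eq_zero_of_lower_of_higher {P : MvPolynomial (Fin 4 ⊕ ℕ × ℕ × ℕ) ℂ}
    (hP : IsRelation P) {N : ℕ}
    (hN : P ∈ MvPolynomial.supported ℂ (variablesLT N : Set (Fin 4 ⊕ ℕ × ℕ × ℕ)))
    {v k : ℕ} (hlow : ∀ a < v, ∀ s, ∀ θ ∈ regularParameters, pderivCoeff P s a θ = 0)
    (hhigh : ∀ l > k, ∀ i j, ∀ θ ∈ regularParameters, pderivCoeff P (i, j, l) v θ = 0)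
    (i j : ℕ) : ∀ θ ∈ regularParameters, pderivCoeff P (i, j, k) v θ = 0 := by
  by_cases hs : (i, j, k) ∈ Finset.range N ×ˢ Finset.range N ×ˢ Finset.range N
  swap
  · simp [pderivCoeff_eq_zero_of_notMem hN hs]
  simp only [Finset.mem_product, Finset.mem_range] at hs
  obtain ⟨hi, hj, hk⟩ := hs
  have hrat := fun i j => pderivCoeff_mem_rationalFunctions P (i, j, k) v
  obtain ⟨D, hD⟩ := ((Finset.eventually_all (Finset.range N)).2 fun i _ =>
    (Finset.eventually_all (Finset.range N)).2 fun j _ =>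
      eventually_mem_polynomialFunctions (hrat i j)).exists
  simp only [Finset.mem_range] at hD
  obtain ⟨n₀, hn₀⟩ :=
    eventually_atTop.1 (eventually_iterate_derivative_ascPochhammer_independent₂ ℂ N D)
  intro θ hθ
  refine eq_zero_of_mem_rationalFunctions (m₀ := max v n₀) (hrat i j) (fun m hm α β => ?_)
    (eval_ascPochhammer_ne_zero hθ v)
  have hpole := eval_ascPochhammer_neg_natCast_ne_zero (K := ℂ) ((le_max_left v n₀).trans hm)
  have hzero := hn₀ (m + 1) (by lia) (fun i j α β => pderivCoeff P (i, j, k) v ![α, β, -m])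
    (fun i hi j hj β => by simpa using hD i hi j hj X (C β) (by simp) (by simp) _ hpole)
    (fun i hi j hj α => by simpa using hD i hi j hj (C α) X (by simp) (by simp) _ hpole)
    (sum_pderivCoeff_mul_eq_zero hP hN hk hlow hhigh ((le_max_left v n₀).trans hm)) i hi j hj
  exact congrFun₂ hzero α β

theorem IsRelation.pderiv {P : MvPolynomial (Fin 4 ⊕ ℕ × ℕ × ℕ) ℂ} (hP : IsRelation P)
    (s : ℕ × ℕ × ℕ) : IsRelation (MvPolynomial.pderiv (Sum.inr s) P) := by
  obtain ⟨N, hN⟩ := exists_mem_supported_variablesLT P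
  have hzero : ∀ v k i j, ∀ θ ∈ regularParameters, pderivCoeff P (i, j, k) v θ = 0 := by
    intro v
    induction v using Nat.strong_induction_on with
    | h v hlow =>
      refine Nat.strong_decreasing_induction ⟨N, fun k hk i j θ _ => ?_⟩ fun k hhigh i j =>
        pderivCoeff_eq_zero_of_lower_of_higher hP hN (fun a ha s => hlow a ha s.2.2 s.1 s.2.1)
          hhigh i j
      rw [pderivCoeff_eq_zero_of_notMem hN (by simp [hk.le]), Pi.zero_apply]
  intro θ hθ
  ext v
  exact hzero v s.2.2 s.1 s.2.1 θ hθ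

lemma eq_zero_of_isRelation_rename_inl {Q : MvPolynomial (Fin 4) ℂ}
    (hQ : IsRelation (MvPolynomial.rename Sum.inl Q)) : Q = 0 := by
  have hone : (1 : ℂ) ∈ {γ : ℂ | ∀ n : ℕ, γ ≠ -n} := fun n h =>
    n.cast_add_one_ne_zero (R := ℂ) (by rw [h, add_neg_cancel])
  have hinf := infinite_of_mem_nhds 1 (isOpen_forall_ne_neg_natCast.mem_nhds hone)
  refine MvPolynomial.funext_set ![Set.univ, Set.univ, Set.univ, {γ : ℂ | ∀ n : ℕ, γ ≠ -n}]
    (by simpa [Fin.forall_fin_succ, Set.infinite_univ] using hinf) fun y hy => ?_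
  have hreg : Fin.tail y ∈ regularParameters := hy 3 trivial
  let yX : Fin 4 → ℂ[X] := Fin.cons X fun i => C (Fin.tail y i)
  have hyX : hgExpansion (Fin.tail y) ∘ Sum.inl =
      fun i => coeToPowerSeries.algHom ℂ (yX i) := by
    funext i
    refine Fin.cases ?_ (fun i => ?_) i <;> simp [yX, hgExpansion]
  have hpoly : MvPolynomial.aeval yX Q = 0 := by
    have hrel := hQ _ hreg
    rw [MvPolynomial.aeval_rename, hyX, ← MvPolynomial.comp_aeval_apply] at hrel
    simpa using hrel
  have heval := MvPolynomial.comp_aeval_apply yX (aeval (y 0)) Q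
  rw [hpoly, map_zero] at heval
  rw [map_zero, heval, ← MvPolynomial.coe_aeval_eq_eval, RingHom.coe_coe]
  congr 2
  ext i
  refine Fin.cases ?_ (fun i => ?_) i <;> simp [yX, Fin.tail]

theorem IsRelation.eq_zero {P : MvPolynomial (Fin 4 ⊕ ℕ × ℕ × ℕ) ℂ} (hP : IsRelation P) :
    P = 0 := by
  induction hd : P.totalDegree using Nat.strong_induction_on generalizing P with
  | h d ih =>
    have hpderiv : ∀ s : ℕ × ℕ × ℕ, MvPolynomial.pderiv (Sum.inr s) P = 0 := fun s => by
      by_contra hs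
      exact hs (ih _ (hd ▸ totalDegree_pderiv_lt hs) (hP.pderiv s) rfl)
    obtain ⟨Q, rfl⟩ := MvPolynomial.exists_rename_eq_of_vars_subset_range P Sum.inl
      Sum.inl_injective fun i hi => by
        rcases i with i | s
        · exact Set.mem_range_self i
        · exact absurd hi (notMem_vars_of_pderiv_eq_zero (hpderiv s))
    rw [eq_zero_of_isRelation_rename_inl hP, map_zero]

end FormalRelations

section Evaluation

variable {𝕜 : Type*} [NontriviallyNormedField 𝕜]

/-- The power series `φ` converges absolutely at `x`, with sum `y`. -/
def HasAbsSum (φ : PowerSeries 𝕜) (x y : 𝕜) : Prop :=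
  (Summable fun n => ‖PowerSeries.coeff n φ * x ^ n‖) ∧
    HasSum (fun n => PowerSeries.coeff n φ * x ^ n) y

lemma hasAbsSum_coe (p : Polynomial 𝕜) (x : 𝕜) : HasAbsSum (p : PowerSeries 𝕜) x (p.eval x) := by
  have hzero : ∀ n ∉ p.support, PowerSeries.coeff n (p : PowerSeries 𝕜) * x ^ n = 0 :=
    fun n hn => by rw [Polynomial.coeff_coe, Polynomial.notMem_support_iff.1 hn, zero_mul]
  refine ⟨summable_of_ne_finset_zero fun n hn => by rw [hzero n hn, norm_zero], ?_⟩
  simpa [Polynomial.eval_eq_sum, Polynomial.sum] using hasSum_sum_of_ne_finset_zero hzero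

lemma HasAbsSum.add {φ ψ : PowerSeries 𝕜} {x y z : 𝕜} (hφ : HasAbsSum φ x y)
    (hψ : HasAbsSum ψ x z) : HasAbsSum (φ + ψ) x (y + z) := by
  simp only [HasAbsSum, map_add, add_mul]
  exact ⟨.of_nonneg_of_le (fun _ => norm_nonneg _) (fun _ => norm_add_le _ _) (hφ.1.add hψ.1),
    hφ.2.add hψ.2⟩

lemma HasAbsSum.mul [CompleteSpace 𝕜] {φ ψ : PowerSeries 𝕜} {x y z : 𝕜} (hφ : HasAbsSum φ x y)
    (hψ : HasAbsSum ψ x z) : HasAbsSum (φ * ψ) x (y * z) := by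
  have hcoeff : ∀ n, PowerSeries.coeff n (φ * ψ) * x ^ n =
      ∑ kl ∈ Finset.HasAntidiagonal.antidiagonal n,
        PowerSeries.coeff kl.1 φ * x ^ kl.1 * (PowerSeries.coeff kl.2 ψ * x ^ kl.2) := fun n => by
    rw [PowerSeries.coeff_mul, Finset.sum_mul]
    refine Finset.sum_congr rfl fun kl hkl => ?_
    rw [← Finset.HasAntidiagonal.mem_antidiagonal.1 hkl, pow_add, mul_mul_mul_comm]
  simp only [HasAbsSum, hcoeff]
  have hsum := summable_norm_sum_mul_antidiagonal_of_summable_norm hφ.1 hψ.1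
  refine ⟨hsum, ?_⟩
  rw [← hφ.2.tsum_eq, ← hψ.2.tsum_eq,
    tsum_mul_tsum_eq_tsum_sum_antidiagonal_of_summable_norm hφ.1 hψ.1]
  exact hsum.of_norm.hasSum

lemma hasAbsSum_aeval [CompleteSpace 𝕜] {σ : Type*} {φ : σ → PowerSeries 𝕜} {x : 𝕜} {y : σ → 𝕜}
    (h : ∀ s, HasAbsSum (φ s) x (y s)) (P : MvPolynomial σ 𝕜) :
    HasAbsSum (MvPolynomial.aeval φ P) x (MvPolynomial.eval y P) := by
  induction P using MvPolynomial.induction_on with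
  | C c => simpa using hasAbsSum_coe (Polynomial.C c) x
  | add P Q hP hQ => simpa only [map_add] using hP.add hQ
  | mul_X P s hP => simpa using hP.mul (h s)

lemma eq_zero_of_eventually_hasAbsSum_zero {φ : PowerSeries 𝕜}
    (h : ∀ᶠ x in nhds 0, HasAbsSum φ x 0) : φ = 0 := by
  have hseries : HasFPowerSeriesAt (0 : 𝕜 → 𝕜)
      (FormalMultilinearSeries.ofScalars 𝕜 fun n => PowerSeries.coeff n φ) 0 := by
    rw [hasFPowerSeriesAt_iff]
    filter_upwards [h] with x hx
    simpa [FormalMultilinearSeries.coeff_ofScalars, mul_comm] using hx.2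
  ext n
  simpa using congrFun ((FormalMultilinearSeries.ofScalars_series_eq_zero 𝕜).1 hseries.eq_zero) n

end Evaluation

section NormalConvergence

open Filter Topology Metric

/-- Local normal convergence of `∑ gₙ` on `s`: near every point of `s`, the functions `gₙ` are
bounded by the terms of a summable series. -/
def NormallySummableOn {ι E F : Type*} [TopologicalSpace E] [Norm F] (g : ι → E → F)
    (s : Set E) : Prop :=
  ∀ p ∈ s, ∃ u : ι → ℝ, Summable u ∧ ∀ᶠ q in 𝓝 p, ∀ n, ‖g n q‖ ≤ u n

lemma NormallySummableOn.summable_norm {ι E F : Type*} [TopologicalSpace E]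
    [SeminormedAddCommGroup F] {g : ι → E → F} {s : Set E} (hg : NormallySummableOn g s) {p : E}
    (hp : p ∈ s) : Summable fun n => ‖g n p‖ := by
  obtain ⟨u, hu, hle⟩ := hg p hp
  exact .of_nonneg_of_le (fun _ => norm_nonneg _) hle.self_of_nhds hu

lemma normallySummableOn_of_ratio {E F : Type*} [TopologicalSpace E] [SeminormedAddCommGroup F]
    {g : ℕ → E → F} {s : Set E} (hg : ∀ n, ∀ p ∈ s, ContinuousAt (g n) p)
    (hratio : ∀ p ∈ s, ∃ r ∈ Set.Ico (0 : ℝ) 1, ∀ᶠ x : ℕ × E in atTop ×ˢ 𝓝 p,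
      ‖g (x.1 + 1) x.2‖ ≤ r * ‖g x.1 x.2‖) : NormallySummableOn g s := by
  intro p hp
  obtain ⟨r, ⟨hr₀, hr₁⟩, hev⟩ := hratio p hp
  obtain ⟨big, hbig, near, hnear, hle⟩ := eventually_prod_iff.1 hev
  obtain ⟨N, hN⟩ := eventually_atTop.1 hbig
  have hinit : ∀ᶠ q in 𝓝 p, ∀ n ∈ Finset.range (N + 1), ‖g n q‖ ≤ ‖g n p‖ + 1 :=
    (Finset.eventually_all _).2 fun n _ =>
      ((hg n p hp).norm.eventually_lt_const (lt_add_one _)).mono fun _ h => h.le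
  refine ⟨fun n => if n < N then ‖g n p‖ + 1 else (‖g N p‖ + 1) * r ^ (n - N), ?_, ?_⟩
  · rw [← summable_nat_add_iff N]
    simpa using (summable_geometric_of_lt_one hr₀ hr₁).mul_left (‖g N p‖ + 1)
  filter_upwards [hinit, hnear] with q hq hqnear n
  split_ifs with hn
  · exact hq n (by simp; lia)
  obtain ⟨b, rfl⟩ := Nat.exists_eq_add_of_le (not_lt.1 hn)
  rw [Nat.add_sub_cancel_left, mul_comm]
  have hgeom : ‖g (N + b) q‖ ≤ r ^ b * ‖g N q‖ := by
    simpa using le_geom (u := fun b => ‖g (N + b) q‖) hr₀ b fun k _ =>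
      hle (hN (N + k) (by lia)) hqnear
  exact hgeom.trans (mul_le_mul_of_nonneg_left (hq N (by simp)) (pow_nonneg hr₀ b))

variable {ι E F : Type*} [NormedAddCommGroup E] [NormedSpace ℂ E] [NormedAddCommGroup F]
  [NormedSpace ℂ F] {g : ι → E → F} {s : Set E}

lemma norm_fderiv_le_of_forall_mem_ball {f : E → F} {p : E} {r C : ℝ} (hr : 0 < r)
    (hf : DifferentiableOn ℂ f (ball p r)) (hC : ∀ q ∈ ball p r, ‖f q‖ ≤ C) :
    ‖fderiv ℂ f p‖ ≤ 2 * C / r := by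
  refine Complex.norm_fderiv_le_div_of_mapsTo_ball hf (fun q hq => ?_) hr
  rw [mem_closedBall, dist_eq_norm]
  linarith [norm_sub_le (f q) (f p), hC q hq, hC p (mem_ball_self hr)]

lemma NormallySummableOn.fderiv_of_isOpen (hg : NormallySummableOn g s) (hs : IsOpen s)
    (hd : ∀ n, DifferentiableOn ℂ (g n) s) :
    NormallySummableOn (fun n => fderiv ℂ (g n)) s := by
  intro p hp
  obtain ⟨u, hu, hle⟩ := hg p hp
  obtain ⟨ε, hε, hball⟩ := eventually_nhds_iff_ball.1 (hle.and (hs.mem_nhds hp))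
  refine ⟨fun n => 2 * u n / (ε / 2), (hu.mul_left 2).div_const _, ?_⟩
  filter_upwards [ball_mem_nhds p (half_pos hε)] with q hq n
  have hsub : ball q (ε / 2) ⊆ ball p ε := ball_subset_ball' (by linarith [mem_ball.1 hq])
  exact norm_fderiv_le_of_forall_mem_ball (half_pos hε)
    ((hd n).mono fun z hz => (hball z (hsub hz)).2) fun z hz => (hball z (hsub hz)).1 n

lemma NormallySummableOn.hasFDerivAt_tsum [CompleteSpace F] (hg : NormallySummableOn g s)
    (hs : IsOpen s) (hd : ∀ n, DifferentiableOn ℂ (g n) s) {p : E} (hp : p ∈ s) :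
    HasFDerivAt (fun q => ∑' n, g n q) (∑' n, fderiv ℂ (g n) p) p := by
  obtain ⟨u, hu, hle⟩ := hg.fderiv_of_isOpen hs hd p hp
  obtain ⟨ε, hε, hball⟩ := eventually_nhds_iff_ball.1 (hle.and (hs.mem_nhds hp))
  exact hasFDerivAt_tsum_of_isPreconnected hu isOpen_ball (convex_ball p ε).isPreconnected
    (fun n q hq => ((hd n).differentiableAt (hs.mem_nhds (hball q hq).2)).hasFDerivAt)
    (fun n q hq => (hball q hq).1 n) (mem_ball_self hε) (hg.summable_norm hp).of_norm
    (mem_ball_self hε)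

end NormalConvergence

section HypergeometricSeries

open Polynomial Filter Topology

/-- `f` is the sum on `s` of the locally normally convergent series `∑ gₙ`. -/
def HasNormalSumOn {ι E F : Type*} [TopologicalSpace E] [SeminormedAddCommGroup F]
    (g : ι → E → F) (f : E → F) (s : Set E) : Prop :=
  NormallySummableOn g s ∧ ∀ p ∈ s, f p = ∑' n, g n p

lemma norm_pd15_le (i : Fin 4) (f : (Fin 4 → ℂ) → ℂ) (p : Fin 4 → ℂ) :
    ‖pd15 i f p‖ ≤ ‖fderiv ℂ f p‖ := by
  simpa [pd15, Pi.norm_single] using (fderiv ℂ f p).le_opNorm (Pi.single i 1)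

lemma HasNormalSumOn.partialDeriv {ι : Type*} {g h : ι → (Fin 4 → ℂ) → ℂ}
    {f : (Fin 4 → ℂ) → ℂ} {s : Set (Fin 4 → ℂ)} (hf : HasNormalSumOn g f s) (hs : IsOpen s)
    (hd : ∀ n, DifferentiableOn ℂ (g n) s) {i : Fin 4}
    (hgh : ∀ n, ∀ p ∈ s, pd15 i (g n) p = h n p) : HasNormalSumOn h (pd15 i f) s := by
  have hfderiv := hf.1.fderiv_of_isOpen hs hd
  refine ⟨fun p hp => ?_, fun p hp => ?_⟩
  · obtain ⟨u, hu, hle⟩ := hfderiv p hp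
    refine ⟨u, hu, ?_⟩
    filter_upwards [hle, hs.mem_nhds hp] with q hq hqs n
    exact hgh n q hqs ▸ (norm_pd15_le i (g n) q).trans (hq n)
  · have hloc : f =ᶠ[𝓝 p] fun q => ∑' n, g n q := eventually_of_mem (hs.mem_nhds hp) hf.2
    rw [pd15, hloc.fderiv_eq, (hf.1.hasFDerivAt_tsum hs hd hp).fderiv]
    rw [← ContinuousLinearMap.apply_apply (𝕜 := ℂ) (Pi.single i 1) (∑' n, fderiv ℂ (g n) p),
      ContinuousLinearMap.map_tsum _ (hfderiv.summable_norm hp).of_norm]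
    exact tsum_congr fun n => hgh n p hp

/-- The domain `Ω` of the hypergeometric function, in the coordinates `(x, α, β, γ)`. -/
def hgDomain : Set (Fin 4 → ℂ) := {p | ‖p 0‖ < 1 ∧ Fin.tail p ∈ regularParameters}

lemma isOpen_hgDomain : IsOpen hgDomain := by
  have hregular : IsOpen {p : Fin 4 → ℂ | Fin.tail p ∈ regularParameters} :=
    isOpen_forall_ne_neg_natCast.preimage (continuous_apply (A := fun _ => ℂ) (3 : Fin 4))
  exact (isOpen_lt (continuous_apply (0 : Fin 4)).norm continuous_const).inter hregular

/-- The `n`-th term of the hypergeometric series differentiated `s = (i, j, k)` times with respect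
to the parameters, as a function of `(x, α, β, γ)`. -/
noncomputable def hgTerm (s : ℕ × ℕ × ℕ) (n : ℕ) (p : Fin 4 → ℂ) : ℂ :=
  hgCoeff s n (Fin.tail p) * p 0 ^ n

lemma differentiableOn_hgTerm (s : ℕ × ℕ × ℕ) (n : ℕ) :
    DifferentiableOn ℂ (hgTerm s n) hgDomain := by
  have heval : ∀ (q : ℂ[X]) (i : Fin 3),
      DifferentiableOn ℂ (fun p : Fin 4 → ℂ => q.eval (Fin.tail p i)) hgDomain := fun q i =>
    q.differentiable.comp_differentiableOn (differentiable_apply i.succ).differentiableOn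
  have hpow : ∀ p ∈ hgDomain, (ascPochhammer ℂ n).eval (Fin.tail p 2) ^ (s.2.2 + 1) ≠ 0 :=
    fun p hp => pow_ne_zero _ (eval_ascPochhammer_ne_zero hp.2 n)
  have hquot := (heval (invDerivNum (ascPochhammer ℂ n) s.2.2) 2).fun_mul
    (((heval (ascPochhammer ℂ n) 2).fun_pow (s.2.2 + 1)).fun_inv hpow)
  exact ((((heval _ 0).fun_mul (heval _ 1)).fun_mul hquot).mul_const _).fun_mul
    ((differentiable_apply 0).fun_pow n).differentiableOn

lemma pd15_eq_of_hasDerivAt {i : Fin 4} {f : (Fin 4 → ℂ) → ℂ} {p : Fin 4 → ℂ} {d : ℂ}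
    (hf : DifferentiableAt ℂ f p)
    (hd : HasDerivAt (fun t => f (Function.update p i t)) d (p i)) : pd15 i f p = d := by
  refine HasDerivAt.unique ?_ hd
  have hf' : HasFDerivAt f (fderiv ℂ f p) (Function.update p i (p i)) := by
    rw [Function.update_eq_self]
    exact hf.hasFDerivAt
  exact hf'.comp_hasDerivAt _ (hasDerivAt_update p i (p i))

lemma hasDerivAt_iterate_derivative {𝕜 : Type*} [NontriviallyNormedField 𝕜] (p : 𝕜[X]) (k : ℕ)
    (z : 𝕜) :
    HasDerivAt (fun t => (derivative^[k] p).eval t) ((derivative^[k + 1] p).eval z) z := by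
  rw [Function.iterate_succ_apply']
  exact (derivative^[k] p).hasDerivAt z

lemma hasDerivAt_invDerivNum_div {𝕜 : Type*} [NontriviallyNormedField 𝕜] {p : 𝕜[X]} {z : 𝕜}
    (hz : p.eval z ≠ 0) (k : ℕ) :
    HasDerivAt (fun t => (invDerivNum p k).eval t / p.eval t ^ (k + 1))
      ((invDerivNum p (k + 1)).eval z / p.eval z ^ (k + 2)) z := by
  refine (((invDerivNum p k).hasDerivAt z).fun_div ((p.hasDerivAt z).fun_pow (k + 1))
    (pow_ne_zero _ hz)).congr_deriv ?_
  simp only [invDerivNum, eval_sub, eval_mul, eval_add, eval_natCast, eval_one]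
  field_simp
  push_cast
  ring

lemma pd15_one_hgTerm (i j k n : ℕ) {p : Fin 4 → ℂ} (hp : p ∈ hgDomain) :
    pd15 1 (hgTerm (i, j, k) n) p = hgTerm (i + 1, j, k) n p := by
  refine pd15_eq_of_hasDerivAt ((differentiableOn_hgTerm _ n).differentiableAt
    (isOpen_hgDomain.mem_nhds hp)) ?_
  simpa [hgTerm, hgCoeff, Fin.tail] using
    ((((hasDerivAt_iterate_derivative (ascPochhammer ℂ n) i (p 1)).mul_const _).mul_const
      _).div_const (n.factorial : ℂ)).mul_const (p 0 ^ n)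

lemma pd15_two_hgTerm (i j k n : ℕ) {p : Fin 4 → ℂ} (hp : p ∈ hgDomain) :
    pd15 2 (hgTerm (i, j, k) n) p = hgTerm (i, j + 1, k) n p := by
  refine pd15_eq_of_hasDerivAt ((differentiableOn_hgTerm _ n).differentiableAt
    (isOpen_hgDomain.mem_nhds hp)) ?_
  simpa [hgTerm, hgCoeff, Fin.tail] using
    ((((hasDerivAt_iterate_derivative (ascPochhammer ℂ n) j (p 2)).const_mul _).mul_const
      _).div_const (n.factorial : ℂ)).mul_const (p 0 ^ n)

lemma pd15_three_hgTerm (i j k n : ℕ) {p : Fin 4 → ℂ} (hp : p ∈ hgDomain) :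
    pd15 3 (hgTerm (i, j, k) n) p = hgTerm (i, j, k + 1) n p := by
  refine pd15_eq_of_hasDerivAt ((differentiableOn_hgTerm _ n).differentiableAt
    (isOpen_hgDomain.mem_nhds hp)) ?_
  simpa [hgTerm, hgCoeff, Fin.tail] using
    (((hasDerivAt_invDerivNum_div (eval_ascPochhammer_ne_zero hp.2 n) k).const_mul _).div_const
      (n.factorial : ℂ)).mul_const (p 0 ^ n)

lemma hgCoeff_zero_succ (n : ℕ) {θ : Fin 3 → ℂ} (hθ : θ ∈ regularParameters) :
    hgCoeff (0, 0, 0) (n + 1) θ =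
      (θ 0 + n) / (n + 1) * ((θ 1 + n) / (n + 1)) / ((θ 2 + n) / (n + 1)) *
        hgCoeff (0, 0, 0) n θ := by
  have hpole : θ 2 + n ≠ 0 := fun h => hθ n (eq_neg_of_add_eq_zero_left h)
  have hasc := eval_ascPochhammer_ne_zero hθ n
  have hsucc : (n + 1 : ℂ) ≠ 0 := n.cast_add_one_ne_zero
  have hfact : (n.factorial : ℂ) ≠ 0 := Nat.cast_ne_zero.2 n.factorial_ne_zero
  simp only [hgCoeff, invDerivNum, Function.iterate_zero, id, ascPochhammer_succ_eval, eval_one,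
    Nat.factorial_succ, Nat.cast_mul, Nat.cast_succ, zero_add, pow_one]
  field_simp

lemma hgTerm_zero_succ (n : ℕ) {p : Fin 4 → ℂ} (hp : p ∈ hgDomain) :
    hgTerm (0, 0, 0) (n + 1) p =
      (p 1 + n) / (n + 1) * ((p 2 + n) / (n + 1)) / ((p 3 + n) / (n + 1)) * p 0 *
        hgTerm (0, 0, 0) n p := by
  rw [hgTerm, hgCoeff_zero_succ n hp.2, pow_succ']
  exact mul_mul_mul_comm _ _ _ _

lemma tendsto_add_natCast_div {X : Type*} {l : Filter X} {f : X → ℂ} {a : ℂ}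
    (hf : Tendsto f l (𝓝 a)) :
    Tendsto (fun x : ℕ × X => (f x.2 + x.1) / (x.1 + 1)) (atTop ×ˢ l) (𝓝 1) := by
  have hinv : Tendsto (fun x : ℕ × X => 1 / ((x.1 : ℂ) + 1)) (atTop ×ˢ l) (𝓝 0) :=
    tendsto_one_div_add_atTop_nhds_zero_nat.comp tendsto_fst
  have hlim := (((hf.comp tendsto_snd).sub_const 1).mul hinv).add_const 1
  rw [mul_zero, zero_add] at hlim
  refine hlim.congr fun x => ?_
  have hne : (x.1 + 1 : ℂ) ≠ 0 := x.1.cast_add_one_ne_zero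
  simp only [Function.comp_apply]
  field_simp
  ring

lemma normallySummableOn_hgTerm_zero : NormallySummableOn (hgTerm (0, 0, 0)) hgDomain := by
  refine normallySummableOn_of_ratio (fun n p hp => ((differentiableOn_hgTerm _ n).differentiableAt
    (isOpen_hgDomain.mem_nhds hp)).continuousAt) fun p hp => ?_
  obtain ⟨r, hr, hr₁⟩ := exists_between hp.1
  refine ⟨r, ⟨(norm_nonneg _).trans hr.le, hr₁⟩, ?_⟩
  have hparam : ∀ i : Fin 4, Tendsto (fun x : ℕ × (Fin 4 → ℂ) => (x.2 i + x.1) / (x.1 + 1))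
      (atTop ×ˢ 𝓝 p) (𝓝 1) := fun i =>
    tendsto_add_natCast_div (f := fun q : Fin 4 → ℂ => q i) (continuous_apply i).continuousAt
  have hratio := (((hparam 1).mul (hparam 2)).div (hparam 3) one_ne_zero).mul
    ((continuous_apply 0).continuousAt.tendsto.comp tendsto_snd)
  rw [mul_one, div_one, one_mul] at hratio
  filter_upwards [hratio.norm.eventually_lt_const hr,
    tendsto_snd.eventually (isOpen_hgDomain.mem_nhds hp)] with x hx hxdom
  rw [hgTerm_zero_succ x.1 hxdom, norm_mul]
  exact mul_le_mul_of_nonneg_right hx.le (norm_nonneg _)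

lemma hasNormalSumOn_hgF15 : HasNormalSumOn (hgTerm (0, 0, 0)) hgF15 hgDomain := by
  refine ⟨normallySummableOn_hgTerm_zero, fun p _ => tsum_congr fun n => ?_⟩
  simp only [hgTerm, hgCoeff, invDerivNum, Fin.tail, Fin.succ_zero_eq_one, Fin.succ_one_eq_two,
    Fin.reduceSucc, Function.iterate_zero, id_eq, eval_one, zero_add, pow_one]
  ring

lemma hasNormalSumOn_hgDeriv15 (i j k : ℕ) :
    HasNormalSumOn (hgTerm (i, j, k)) (hgDeriv15 i j k) hgDomain := by
  have hγ : HasNormalSumOn (hgTerm (0, 0, k)) ((pd15 3)^[k] hgF15) hgDomain := by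
    induction k with
    | zero => exact hasNormalSumOn_hgF15
    | succ k ih =>
      rw [Function.iterate_succ_apply']
      exact ih.partialDeriv isOpen_hgDomain (differentiableOn_hgTerm _)
        fun n _ => pd15_three_hgTerm 0 0 k n
  have hβ : HasNormalSumOn (hgTerm (0, j, k)) ((pd15 2)^[j] ((pd15 3)^[k] hgF15)) hgDomain := by
    induction j with
    | zero => exact hγ
    | succ j ih =>
      rw [Function.iterate_succ_apply']
      exact ih.partialDeriv isOpen_hgDomain (differentiableOn_hgTerm _)
        fun n _ => pd15_two_hgTerm 0 j k n
  rw [hgDeriv15]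
  induction i with
  | zero => exact hβ
  | succ i ih =>
    rw [Function.iterate_succ_apply']
    exact ih.partialDeriv isOpen_hgDomain (differentiableOn_hgTerm _)
      fun n _ => pd15_one_hgTerm i j k n

lemma hasAbsSum_hgExpansion {p : Fin 4 → ℂ} (hp : p ∈ hgDomain) (s : Fin 4 ⊕ ℕ × ℕ × ℕ) :
    HasAbsSum (hgExpansion (Fin.tail p) s) (p 0)
      (Sum.elim (fun i => p i) (fun ijk => hgDeriv15 ijk.1 ijk.2.1 ijk.2.2 p) s) := by
  rcases s with i | ⟨i, j, k⟩
  · refine Fin.cases ?_ (fun i => ?_) i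
    · simpa [hgExpansion] using hasAbsSum_coe X (p 0)
    · simpa [hgExpansion, Fin.tail] using hasAbsSum_coe (C (p i.succ)) (p 0)
  · obtain ⟨hsummable, hsum⟩ := hasNormalSumOn_hgDeriv15 i j k
    have habs := hsummable.summable_norm hp
    have hhas := habs.of_norm.hasSum
    rw [← hsum p hp] at hhas
    simpa only [HasAbsSum, hgExpansion, Sum.elim_inr, PowerSeries.coeff_mk, hgTerm] using
      And.intro habs hhas

lemma isRelation_of_forall_eval_eq_zero {P : MvPolynomial (Fin 4 ⊕ ℕ × ℕ × ℕ) ℂ}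
    (hP : ∀ p ∈ hgDomain, MvPolynomial.eval
      (Sum.elim (fun i => p i) (fun ijk => hgDeriv15 ijk.1 ijk.2.1 ijk.2.2 p)) P = 0) :
    IsRelation P := by
  intro θ hθ
  refine eq_zero_of_eventually_hasAbsSum_zero ?_
  filter_upwards [Metric.ball_mem_nhds (0 : ℂ) one_pos] with x hx
  have hp : (Fin.cons x θ : Fin 4 → ℂ) ∈ hgDomain := ⟨mem_ball_zero_iff.1 hx, hθ⟩
  have hsum := hasAbsSum_aeval (hasAbsSum_hgExpansion hp) P
  rwa [hP _ hp, Fin.cons_zero, Fin.tail_cons] at hsum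

end HypergeometricSeries

end Hypergeometric

/-- The hypergeometric function satisfies no nonzero algebraic partial
differential equation with respect to the parameters `α, β, γ`: for every nonzero
polynomial `P` in the variables `X, A, B, C` (indexed by `Fin 4`) and `Y_{ijk}`
(indexed by `ℕ³`), there is a point of
`Ω = {(x,α,β,γ) : |x| < 1, γ ∉ -ℕ}` where substituting the coordinates and the parameter
derivatives of `F` into `P` gives a nonzero value. -/
theorem stmt15 :
    let Ω : Set (Fin 4 → ℂ) := {p | ‖p 0‖ < 1 ∧ ∀ n : ℕ, p 3 ≠ -(n : ℂ)}
    ∀ P : MvPolynomial (Fin 4 ⊕ ℕ × ℕ × ℕ) ℂ, P ≠ 0 →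
      ∃ p ∈ Ω, MvPolynomial.eval
        (Sum.elim (fun i => p i)
          (fun ijk => hgDeriv15 ijk.1 ijk.2.1 ijk.2.2 p)) P ≠ 0 := by
  intro Ω P hP
  by_contra! h
  exact hP (Hypergeometric.isRelation_of_forall_eval_eq_zero h).eq_zero
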